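/- Let k be a countable totally ordered division ring, let I and J be countable sets with I ⊊ J and J∖I infinite, let K and L be distributive 0-lattices with L countable and completely normal, let φ : K → L be a 0-lattice homomorphism, and let f : Op⁻(k^(I), k^(I)) → K be a 0-lattice homomorphism. Then there exists a surjective lattice homomorphism g : Op⁻(k^(J), k^(J)) ↠ L such that g ∘ ε_{I,J} = φ ∘ f on Op⁻(k^(I), k^(I)). -/

import Mathlib

open scoped Classical

/-- The linear functional `x ↦ Σ_i a_i * x_i` on `k^(ι)` associated with `a ∈ k^(ι)`. -/
def pairing {k ι : Type*} [DivisionRing k] (a x : ι →₀ k) : k :=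
  a.sum fun i c => c * x i

/-- The vectors of `k^(ι)` supported on a subset `I ⊆ ι` (the copy of `k^(I)`
inside `k^(ι)`). -/
def suppIn {k ι : Type*} [Zero k] (I : Set ι) : Set (ι →₀ k) :=
  {y : ι →₀ k | ∀ i, i ∉ I → y i = 0}

/-- Membership in `Op⁻(A, Ω)`: the sublattice of the powerset of `Ω` generated by the
sets `⟦a > 0⟧` and `⟦a < 0⟧` for `a ∈ A` (identifying `a` with its linear functional). -/
inductive MemOp {k ι : Type*} [DivisionRing k] [LinearOrder k]
    (A Ω : Set (ι →₀ k)) : Set (ι →₀ k) → Prop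
  | pos (a : ι →₀ k) (ha : a ∈ A) : MemOp A Ω {x ∈ Ω | 0 < pairing a x}
  | neg (a : ι →₀ k) (ha : a ∈ A) : MemOp A Ω {x ∈ Ω | pairing a x < 0}
  | union {U V : Set (ι →₀ k)} : MemOp A Ω U → MemOp A Ω V → MemOp A Ω (U ∪ V)
  | inter {U V : Set (ι →₀ k)} : MemOp A Ω U → MemOp A Ω V → MemOp A Ω (U ∩ V)

/-- Restriction `y ↦ y↾I` of a vector to the coordinates in `I`. -/
noncomputable def restrictTo {k ι : Type*} [Zero k] (I : Set ι) (y : ι →₀ k) : ι →₀ k :=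
  y.filter (· ∈ I)

/-- The canonical Boolean embedding `ε_{I,J} : P(k^(I)) → P(k^(J))`,
`X ↦ {y : y↾I ∈ X}`. -/
noncomputable def epsilonMap {k ι : Type*} [Zero k] (I : Set ι) (X : Set (ι →₀ k)) :
    Set (ι →₀ k) :=
  {y : ι →₀ k | restrictTo I y ∈ X}

/-!
The idea is to encode a lattice homomorphism `Op⁻(V, V) → L` by its values `s a` on the open
half-spaces `⟦a > 0⟧`. Thinking of `s a` as an `L`-valued truth value of `0 < a`, the maps `s` that
arise are exactly the `L`-valued linear total preorders on `V`: reduced modulo a prime ideal of `L`,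
such a map is a genuine linear total preorder, and finitely many signs in it are realized by a
vector, by Fourier–Motzkin elimination; so inclusions between sets in `Op⁻(V, V)` are respected.

An `L`-valued linear total preorder on `V` is extended to `k × V` by choosing, for every `c ∈ V`,
the truth values of `c < e` and `e < c`, where `e = (1, 0)`. Complete normality of `L` is what
allows one to make this choice for one more `c` when it has been made for finitely many, and the
truth value of `0 < e` is arbitrary. As `J ∖ I` is infinite, all elements of `L` can be hit.
-/

section Lattice

variable {L : Type*} [DistribLattice L] [OrderBot L]

/-- Complete normality of a lattice with a least element. -/
def IsCompletelyNormal (L : Type*) [Lattice L] [OrderBot L] : Prop :=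
  ∀ a b : L, ∃ x y : L, a ⊔ b = a ⊔ y ∧ a ⊔ b = x ⊔ b ∧ x ⊓ y = ⊥

theorem IsCompletelyNormal.exists_disjoint (hL : IsCompletelyNormal L) (a b : L) :
    ∃ x ≤ a, ∃ y ≤ b, Disjoint x y ∧ a ≤ b ⊔ x ∧ b ≤ a ⊔ y := by
  obtain ⟨x, y, hy, hx, hxy⟩ := hL a b
  refine ⟨x ⊓ a, inf_le_right, y ⊓ b, inf_le_right,
    (disjoint_iff.2 hxy).mono inf_le_left inf_le_left, ?_, ?_⟩
  · rw [sup_inf_left, sup_comm b x, ← hx]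
    exact le_inf le_sup_left le_sup_right
  · rw [sup_inf_left, ← hy]
    exact le_inf le_sup_right le_sup_right

theorem IsCompletelyNormal.exists_disjoint_finset (hL : IsCompletelyNormal L) {X : Type*}
    {A : Finset X} (hA : A.Nonempty) {a b : X → L}
    (ha : ∀ i ∈ A, ∀ j ∈ A, a i ≤ b i ⊔ a j) (hb : ∀ i ∈ A, ∀ j ∈ A, b i ≤ a i ⊔ b j) :
    ∃ u v : L, Disjoint u v ∧ ∀ i ∈ A, u ≤ a i ∧ v ≤ b i ∧ a i ≤ b i ⊔ u ∧ b i ≤ a i ⊔ v := by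
  choose x hxa y hyb hxy hax hby using fun i j => hL.exists_disjoint (a j) (b i)
  refine ⟨A.sup fun i => A.inf' hA (x i), A.sup fun j => A.inf' hA fun i => y i j,
    ?_, fun i hi => ⟨?_, ?_, ?_, ?_⟩⟩
  · simp only [Finset.disjoint_sup_left, Finset.disjoint_sup_right]
    exact fun j hj i hi => (hxy i j).mono (Finset.inf'_le _ hj) (Finset.inf'_le _ hi)
  · exact Finset.sup_le fun j _ => (Finset.inf'_le _ hi).trans (hxa j i)
  · exact Finset.sup_le fun j _ => (Finset.inf'_le _ hi).trans (hyb i j)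
  · refine le_trans ?_ (sup_le_sup_left (Finset.le_sup hi) _)
    rw [Finset.inf'_sup_distrib_left]
    exact Finset.le_inf' _ _ fun j hj => (ha i hi j hj).trans (sup_le le_sup_left (hax i j))
  · refine le_trans ?_ (sup_le_sup_left (Finset.le_sup hi) _)
    rw [Finset.inf'_sup_distrib_left]
    exact Finset.le_inf' _ _ fun j hj => (hb i hi j hj).trans (sup_le le_sup_left (hby j i))

theorem le_sup_of_le_sup_of_disjoint {x p q z w : L} (hz : x ≤ z ⊔ p) (hw : x ≤ w ⊔ q)
    (hzw : Disjoint z w) : x ≤ p ⊔ q := by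
  have h : x ≤ (p ⊔ q ⊔ z) ⊓ (p ⊔ q ⊔ w) :=
    le_inf (hz.trans (sup_le le_sup_right (le_sup_left.trans le_sup_left)))
      (hw.trans (sup_le le_sup_right (le_sup_right.trans le_sup_left)))
  rwa [← sup_inf_left, hzw.eq_bot, sup_bot_eq] at h

theorem exists_latticeHom_prop_of_not_le {L : Type*} [DistribLattice L] {l m : L} (h : ¬ l ≤ m) :
    ∃ f : LatticeHom L Prop, f l ∧ ¬ f m := by
  obtain ⟨Q, hQ, hmQ, hlQ⟩ := DistribLattice.prime_ideal_of_disjoint_filter_ideal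
    (F := Order.PFilter.principal l) (I := Order.Ideal.principal m)
    (Set.disjoint_left.2 fun x hx hx' => h (le_trans hx hx'))
  have hinf (a b : L) : a ⊓ b ∈ Q ↔ a ∈ Q ∨ b ∈ Q :=
    ⟨hQ.mem_or_mem, fun h => h.elim (Q.lower inf_le_left) (Q.lower inf_le_right)⟩
  let f : LatticeHom L Prop :=
    { toFun a := a ∉ Q
      map_sup' a b := by simp [Order.Ideal.sup_mem_iff, imp_iff_not_or]
      map_inf' a b := by simp [hinf] }
  exact ⟨f, Set.disjoint_left.1 hlQ (Order.PFilter.mem_principal.2 le_rfl),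
    not_not.2 (hmQ Order.Ideal.mem_principal_self)⟩

end Lattice

section Limit

variable {X Y : Type*}

theorem exists_subset_of_finite_of_monotone {A : ℕ → Set X} (hA : Monotone A)
    (hcover : ∀ x, ∃ n, x ∈ A n) {T : Set X} (hT : T.Finite) : ∃ n, T ⊆ A n := by
  choose N hN using hcover
  obtain ⟨n, hn⟩ := (hT.image N).bddAbove
  exact ⟨n, fun x hx => hA (hn (Set.mem_image_of_mem N hx)) (hN x)⟩

theorem exists_limit_of_extension {A : ℕ → Set X} (hA : Monotone A)
    (hcover : ∀ x, ∃ n, x ∈ A n) {P : ℕ → (X → Y) → Prop} {F₀ : X → Y} (h₀ : P 0 F₀)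
    (hstep : ∀ n F, P n F → ∃ F', P (n + 1) F' ∧ Set.EqOn F F' (A n)) :
    ∃ F : X → Y, Set.EqOn F F₀ (A 0) ∧
      ∀ T : Set X, T.Finite → ∃ n F', T ⊆ A n ∧ P n F' ∧ Set.EqOn F F' T := by
  choose! E hE hEeq using hstep
  let S (n : ℕ) : X → Y := Nat.rec F₀ E n
  have hS (n : ℕ) : P n (S n) := by
    induction n with
    | zero => exact h₀
    | succ n ih => exact hE n _ ih
  have hSeq {m n : ℕ} (hmn : m ≤ n) : Set.EqOn (S m) (S n) (A m) := by
    induction n, hmn using Nat.le_induction with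
    | base => exact fun _ _ => rfl
    | succ n hmn ih => exact ih.trans ((hEeq n _ (hS n)).mono (hA hmn))
  choose N hN using hcover
  have hlim (n : ℕ) : Set.EqOn (fun x => S (N x) x) (S n) (A n) := fun x hx =>
    (le_total (N x) n).elim (fun h => hSeq h (hN x)) (fun h => (hSeq h hx).symm)
  refine ⟨fun x => S (N x) x, hlim 0, fun T hT => ?_⟩
  obtain ⟨n, hn⟩ := exists_subset_of_finite_of_monotone hA (fun x => ⟨N x, hN x⟩) hT
  exact ⟨n, S n, hn, hS n, (hlim n).mono hn⟩

end Limit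

section Cut

/-- An `L`-valued strict weak order, that is, `r x y` is thought of as the truth value of `x < y`
in a total preorder. -/
structure IsValuedWeakOrder {X L : Type*} [Lattice L] [OrderBot L] (r : X → X → L) : Prop where
  asymm : ∀ x y, Disjoint (r x y) (r y x)
  le_sup : ∀ x y z, r x z ≤ r x y ⊔ r y z

/-- A consistent placement of a new point `e` relative to the elements of `A`: the components of
`F x` are thought of as the truth values of `x < e` and `e < x`. -/
structure IsCut {X L : Type*} [Lattice L] [OrderBot L] (r : X → X → L) (A : Set X)
    (F : X → L × L) : Prop where
  disjoint : ∀ x ∈ A, Disjoint (F x).1 (F x).2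
  fst_le : ∀ x ∈ A, ∀ y ∈ A, (F x).1 ≤ r x y ⊔ (F y).1
  snd_le : ∀ x ∈ A, ∀ y ∈ A, (F y).2 ≤ (F x).2 ⊔ r x y
  le_sup : ∀ x ∈ A, ∀ y ∈ A, r x y ≤ (F x).1 ⊔ (F y).2

variable {X L : Type*} [DistribLattice L] [OrderBot L] {r : X → X → L} {A : Set X} {F : X → L × L}

theorem IsValuedWeakOrder.self_eq_bot (hr : IsValuedWeakOrder r) (x : X) : r x x = ⊥ :=
  disjoint_self.1 (hr.asymm x x)

theorem IsValuedWeakOrder.flip (hr : IsValuedWeakOrder r) : IsValuedWeakOrder (flip r) where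
  asymm x y := hr.asymm y x
  le_sup x y z := (hr.le_sup z y x).trans_eq (sup_comm _ _)

theorem IsCut.mono (hF : IsCut r A F) {B : Set X} (hBA : B ⊆ A) : IsCut r B F where
  disjoint x hx := hF.disjoint x (hBA hx)
  fst_le x hx y hy := hF.fst_le x (hBA hx) y (hBA hy)
  snd_le x hx y hy := hF.snd_le x (hBA hx) y (hBA hy)
  le_sup x hx y hy := hF.le_sup x (hBA hx) y (hBA hy)

theorem IsCut.congr (hF : IsCut r A F) {G : X → L × L} (hFG : Set.EqOn F G A) : IsCut r A G where
  disjoint x hx := hFG hx ▸ hF.disjoint x hx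
  fst_le x hx y hy := hFG hx ▸ hFG hy ▸ hF.fst_le x hx y hy
  snd_le x hx y hy := hFG hx ▸ hFG hy ▸ hF.snd_le x hx y hy
  le_sup x hx y hy := hFG hx ▸ hFG hy ▸ hF.le_sup x hx y hy

theorem IsCut.swap (hF : IsCut r A F) : IsCut (flip r) A (Prod.swap ∘ F) where
  disjoint x hx := (hF.disjoint x hx).symm
  fst_le x hx y hy := (hF.snd_le y hy x hx).trans_eq (sup_comm _ _)
  snd_le x hx y hy := (hF.fst_le y hy x hx).trans_eq (sup_comm _ _)
  le_sup x hx y hy := (hF.le_sup y hy x hx).trans_eq (sup_comm _ _)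

theorem isCut_singleton (hr : IsValuedWeakOrder r) {x : X} (hx : Disjoint (F x).1 (F x).2) :
    IsCut r {x} F := by
  constructor <;> simp [hr.self_eq_bot, hx]

theorem isCut_univ_of_finite (h : ∀ T : Set X, T.Finite → IsCut r T F) : IsCut r Set.univ F where
  disjoint x _ := (h {x} (Set.toFinite _)).disjoint x (by simp)
  fst_le x _ y _ := (h {x, y} (Set.toFinite _)).fst_le x (by simp) y (by simp)
  snd_le x _ y _ := (h {x, y} (Set.toFinite _)).snd_le x (by simp) y (by simp)
  le_sup x _ y _ := (h {x, y} (Set.toFinite _)).le_sup x (by simp) y (by simp)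

theorem IsCut.compatible (hr : IsValuedWeakOrder r) (hF : IsCut r A F) (c : X) :
    ∀ i ∈ A, ∀ j ∈ A, (F i).1 ⊔ r c i ≤ ((F i).2 ⊔ r i c) ⊔ ((F j).1 ⊔ r c j) := by
  refine fun i hi j hj => sup_le ?_ ?_
  · calc (F i).1 ≤ r i j ⊔ (F j).1 := hF.fst_le i hi j hj
      _ ≤ (r i c ⊔ r c j) ⊔ (F j).1 := sup_le_sup_right (hr.le_sup i c j) _
      _ ≤ ((F i).2 ⊔ r i c) ⊔ ((F j).1 ⊔ r c j) := by order
  · calc r c i ≤ r c j ⊔ r j i := hr.le_sup c j i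
      _ ≤ r c j ⊔ ((F j).1 ⊔ (F i).2) := sup_le_sup_left (hF.le_sup j hj i hi) _
      _ ≤ ((F i).2 ⊔ r i c) ⊔ ((F j).1 ⊔ r c j) := by order

theorem IsCut.update (hr : IsValuedWeakOrder r) (hF : IsCut r A F) {c : X} (hc : c ∉ A) {p : L × L}
    (hp : Disjoint p.1 p.2)
    (h : ∀ i ∈ A, p.1 ≤ (F i).1 ⊔ r c i ∧ p.2 ≤ (F i).2 ⊔ r i c ∧
      (F i).1 ⊔ r c i ≤ ((F i).2 ⊔ r i c) ⊔ p.1 ∧ (F i).2 ⊔ r i c ≤ ((F i).1 ⊔ r c i) ⊔ p.2) :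
    IsCut r (insert c A) (Function.update F c p) := by
  have hne (i) (hi : i ∈ A) : Function.update F c p i = F i :=
    Function.update_of_ne (ne_of_mem_of_not_mem hi hc) _ _
  have hfst (i) (hi : i ∈ A) : (F i).1 ≤ r i c ⊔ p.1 :=
    (hF.disjoint i hi).left_le_of_le_sup_right (by have := h i hi; order)
  have hsnd (i) (hi : i ∈ A) : (F i).2 ≤ p.2 ⊔ r c i :=
    (hF.disjoint i hi).symm.left_le_of_le_sup_right (by have := h i hi; order)
  have hlt (i) (hi : i ∈ A) : r c i ≤ p.1 ⊔ (F i).2 :=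
    (hr.asymm c i).left_le_of_le_sup_right (by have := h i hi; order)
  have hgt (i) (hi : i ∈ A) : r i c ≤ (F i).1 ⊔ p.2 :=
    (hr.asymm i c).left_le_of_le_sup_right (by have := h i hi; order)
  constructor
  · rintro i (rfl | hi)
    · simpa using hp
    · simpa only [hne i hi] using hF.disjoint i hi
  · rintro i (rfl | hi) j (rfl | hj)
    · exact le_sup_right
    · simpa [hne j hj, sup_comm] using (h j hj).1
    · simpa [hne i hi] using hfst i hi
    · simpa only [hne i hi, hne j hj] using hF.fst_le i hi j hj
  · rintro i (rfl | hi) j (rfl | hj)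
    · exact le_sup_left
    · simpa [hne j hj] using hsnd j hj
    · simpa [hne i hi] using (h i hi).2.1
    · simpa only [hne i hi, hne j hj] using hF.snd_le i hi j hj
  · rintro i (rfl | hi) j (rfl | hj)
    · simp [hr.self_eq_bot]
    · simpa [hne j hj] using hlt j hj
    · simpa [hne i hi] using hgt i hi
    · simpa only [hne i hi, hne j hj] using hF.le_sup i hi j hj

theorem IsCut.exists_insert (hL : IsCompletelyNormal L) (hr : IsValuedWeakOrder r)
    (hF : IsCut r A F) (hA : A.Finite) (hA₀ : A.Nonempty) (c : X) :
    ∃ G : X → L × L, IsCut r (insert c A) G ∧ Set.EqOn F G A := by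
  by_cases hc : c ∈ A
  · exact ⟨F, by rwa [Set.insert_eq_of_mem hc], fun _ _ => rfl⟩
  lift A to Finset X using hA
  obtain ⟨u, v, huv, h⟩ := hL.exists_disjoint_finset hA₀ (hF.compatible hr c)
    (hF.swap.compatible hr.flip c)
  exact ⟨Function.update F c (u, v), hF.update hr hc huv h, fun i hi =>
    (Function.update_of_ne (ne_of_mem_of_not_mem hi hc) _ _).symm⟩

theorem IsValuedWeakOrder.exists_isCut [Countable X] (hL : IsCompletelyNormal L)
    (hr : IsValuedWeakOrder r) (x : X) (l : L) :
    ∃ F : X → L × L, IsCut r Set.univ F ∧ (F x).1 = l := by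
  have : Nonempty X := ⟨x⟩
  obtain ⟨c, hc⟩ := exists_surjective_nat X
  let A (n : ℕ) : Set X := insert x (c '' Set.Iio n)
  have hA : Monotone A := fun m n hmn =>
    Set.insert_subset_insert (Set.image_mono (Set.Iio_subset_Iio hmn))
  have hcover (y : X) : ∃ n, y ∈ A n := by
    obtain ⟨n, rfl⟩ := hc y
    exact ⟨n + 1, Or.inr (Set.mem_image_of_mem c (Set.mem_Iio.2 n.lt_succ_self))⟩
  have hsucc (n : ℕ) : A (n + 1) = insert (c n) (A n) := by
    have hIio : Set.Iio (n + 1) = insert n (Set.Iio n) := by grind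
    simp only [A, hIio, Set.image_insert_eq, Set.insert_comm]
  obtain ⟨F, hF₀, hF⟩ := exists_limit_of_extension hA hcover (P := fun n F => IsCut r (A n) F)
    (F₀ := fun _ => (l, ⊥)) (by simpa [A] using isCut_singleton hr (disjoint_bot_right))
    fun n F hF => hsucc n ▸ hF.exists_insert hL hr
      (((Set.finite_Iio n).image c).insert x) (Set.insert_nonempty _ _) (c n)
  refine ⟨F, isCut_univ_of_finite fun T hT => ?_, by rw [hF₀ (Set.mem_insert x _)]⟩
  obtain ⟨n, G, hTA, hG, hFG⟩ := hF T hT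
  exact (hG.mono hTA).congr hFG.symm

end Cut

section Sign

/-- An `L`-valued linear total preorder: `s a` is thought of as the truth value of `0 < a` in a
total preorder on `V` that is invariant under translations and under multiplication by positive
scalars. -/
structure IsSignMap (k : Type*) {V L : Type*} [DivisionRing k] [LinearOrder k] [AddCommGroup V]
    [Module k V] [Lattice L] [OrderBot L] (s : V → L) : Prop where
  disjoint_neg : ∀ a, Disjoint (s a) (s (-a))
  add_le : ∀ a b, s (a + b) ≤ s a ⊔ s b
  smul_eq : ∀ {t : k}, 0 < t → ∀ a, s (t • a) = s a

variable {k V L : Type*} [DivisionRing k] [LinearOrder k] [AddCommGroup V] [Module k V]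
  [DistribLattice L] [OrderBot L] {s : V → L}

theorem IsSignMap.isValuedWeakOrder (hs : IsSignMap k s) :
    IsValuedWeakOrder fun a b => s (b - a) where
  asymm a b := by simpa using hs.disjoint_neg (b - a)
  le_sup a b c := by simpa using hs.add_le (b - a) (c - b)

theorem IsSignMap.eq_of_smul_eq_smul (hs : IsSignMap k s) {t r : k} (ht : 0 < t) (hr : 0 < r)
    {a b : V} (h : t • a = r • b) : s a = s b := by
  rw [← hs.smul_eq ht, h, hs.smul_eq hr]

theorem IsSignMap.comp_linearMap (hs : IsSignMap k s) {W : Type*} [AddCommGroup W] [Module k W]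
    (T : W →ₗ[k] V) : IsSignMap k (s ∘ T) where
  disjoint_neg a := by simpa using hs.disjoint_neg (T a)
  add_le a b := by simpa using hs.add_le (T a) (T b)
  smul_eq ht a := by simpa using hs.smul_eq ht (T a)

theorem IsSignMap.comp_latticeHom (hs : IsSignMap k s) {M : Type*} [DistribLattice M] [OrderBot M]
    (h : LatticeHom L M) (h_bot : h ⊥ = ⊥) : IsSignMap k (h ∘ s) where
  disjoint_neg a := by
    rw [disjoint_iff, Function.comp_apply, Function.comp_apply, ← map_inf,
      (hs.disjoint_neg a).eq_bot, h_bot]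
  add_le a b := by simpa using OrderHomClass.mono h (hs.add_le a b)
  smul_eq ht a := congrArg h (hs.smul_eq ht a)

theorem isSignMap_of_finite
    (h : ∀ T : Set V, T.Finite → ∃ s' : V → L, IsSignMap k s' ∧ Set.EqOn s s' T) :
    IsSignMap k s where
  disjoint_neg a := by
    obtain ⟨s', hs', h⟩ := h {a, -a} (Set.toFinite _)
    rw [h (by simp : a ∈ _), h (by simp : -a ∈ _)]
    exact hs'.disjoint_neg a
  add_le a b := by
    obtain ⟨s', hs', h⟩ := h {a, b, a + b} (Set.toFinite _)
    rw [h (by simp : a ∈ _), h (by simp : b ∈ _), h (by simp : a + b ∈ _)]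
    exact hs'.add_le a b
  smul_eq {t} ht a := by
    obtain ⟨s', hs', h⟩ := h {a, t • a} (Set.toFinite _)
    rw [h (by simp : a ∈ _), h (by simp : t • a ∈ _)]
    exact hs'.smul_eq ht a

end Sign

section SignExtend

variable {k V L : Type*} [DivisionRing k] [AddCommGroup V] [Module k V]

theorem smul_neg_inv_smul {t : k} (ht : t ≠ 0) (a : V) : t • -(t⁻¹ • a) = -a := by
  rw [smul_neg, smul_inv_smul₀ ht]

variable [LinearOrder k]

/-- The `L`-valued linear total preorder on `k × V` that extends `s` and for which the components of
`F c` are the truth values of `c < (1, 0)` and `(1, 0) < c`, for `c` in `V`. -/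
def signExtend (s : V → L) (F : V → L × L) (x : k × V) : L :=
  if x.1 = 0 then s x.2 else
    if 0 < x.1 then (F (-(x.1⁻¹ • x.2))).1 else (F (-(x.1⁻¹ • x.2))).2

/-- The placement of `-e` that corresponds to the placement `F` of `e`. -/
def oppCut (F : V → L × L) (c : V) : L × L := (F (-c)).swap

variable {s : V → L} {F : V → L × L}

@[simp]
theorem signExtend_zero (a : V) : signExtend s F ((0 : k), a) = s a :=
  if_pos rfl

theorem signExtend_of_pos {t : k} (ht : 0 < t) (a : V) :
    signExtend s F (t, a) = (F (-(t⁻¹ • a))).1 := by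
  simp [signExtend, ht, ht.ne']

theorem signExtend_of_neg {t : k} (ht : t < 0) (a : V) :
    signExtend s F (t, a) = (F (-(t⁻¹ • a))).2 := by
  simp [signExtend, ht.ne, ht.not_gt]

theorem signExtend_oppCut [IsStrictOrderedRing k] (t : k) (a : V) :
    signExtend s (oppCut F) (-t, a) = signExtend s F (t, a) := by
  obtain ht | rfl | ht := lt_trichotomy t 0
  · simp [signExtend_of_neg ht, signExtend_of_pos (neg_pos.2 ht), oppCut]
  · simp
  · simp [signExtend_of_pos ht, signExtend_of_neg (neg_neg_of_pos ht), oppCut]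

variable [DistribLattice L] [OrderBot L]

theorem IsCut.oppCut (hF : IsCut (fun a b => s (b - a)) Set.univ F) :
    IsCut (fun a b => s (b - a)) Set.univ (oppCut F) where
  disjoint x _ := hF.swap.disjoint (-x) trivial
  fst_le x _ y _ := by simpa [flip, neg_add_eq_sub] using! hF.swap.fst_le (-x) trivial (-y) trivial
  snd_le x _ y _ := by simpa [flip, neg_add_eq_sub] using! hF.swap.snd_le (-x) trivial (-y) trivial
  le_sup x _ y _ := by simpa [flip, neg_add_eq_sub] using! hF.swap.le_sup (-x) trivial (-y) trivial

variable [IsStrictOrderedRing k]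

theorem signExtend_smul (hs : IsSignMap k s) {u : k} (hu : 0 < u) (x : k × V) :
    signExtend s F (u • x) = signExtend s F x := by
  obtain ⟨t, a⟩ := x
  have h : (u * t)⁻¹ • u • a = t⁻¹ • a := by
    rw [smul_smul, mul_inv_rev, inv_mul_cancel_right₀ hu.ne']
  rw [Prod.smul_mk, smul_eq_mul]
  obtain ht | rfl | ht := lt_trichotomy t 0
  · rw [signExtend_of_neg ht, signExtend_of_neg (mul_neg_of_pos_of_neg hu ht), h]
  · simp [hs.smul_eq hu]
  · rw [signExtend_of_pos ht, signExtend_of_pos (mul_pos hu ht), h]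

theorem disjoint_signExtend_neg (hs : IsSignMap k s)
    (hF : IsCut (fun a b => s (b - a)) Set.univ F) (x : k × V) :
    Disjoint (signExtend s F x) (signExtend s F (-x)) := by
  obtain ⟨t, a⟩ := x
  obtain ht | rfl | ht := lt_trichotomy t 0
  · simpa [signExtend_of_neg ht, signExtend_of_pos (neg_pos.2 ht)] using
      (hF.disjoint (-(t⁻¹ • a)) trivial).symm
  · simpa using hs.disjoint_neg a
  · simpa [signExtend_of_pos ht, signExtend_of_neg (neg_neg_of_pos ht)] using
      hF.disjoint (-(t⁻¹ • a)) trivial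

theorem signExtend_add_le_of_pos_of_zero (hs : IsSignMap k s)
    (hF : IsCut (fun a b => s (b - a)) Set.univ F) {t : k} (ht : 0 < t) (a b : V) :
    signExtend s F (t, a + b) ≤ signExtend s F (t, a) ⊔ s b := by
  have h := hF.fst_le (-(t⁻¹ • (a + b))) trivial (-(t⁻¹ • a)) trivial
  rw [neg_sub_neg, ← smul_sub, add_sub_cancel_left, hs.smul_eq (inv_pos.2 ht)] at h
  rwa [signExtend_of_pos ht, signExtend_of_pos ht, sup_comm]

theorem signExtend_add_le_of_pos_of_pos (hs : IsSignMap k s)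
    (hF : IsCut (fun a b => s (b - a)) Set.univ F) {t r : k} (ht : 0 < t) (hr : 0 < r) (a b : V) :
    signExtend s F (t + r, a + b) ≤ signExtend s F (t, a) ⊔ signExtend s F (r, b) := by
  have hw := add_pos ht hr
  rw [signExtend_of_pos ht, signExtend_of_pos hr, signExtend_of_pos hw]
  have hc := smul_neg_inv_smul ht.ne' a
  have hd := smul_neg_inv_smul hr.ne' b
  have hf := smul_neg_inv_smul hw.ne' (a + b)
  generalize -(t⁻¹ • a) = c at *
  generalize -(r⁻¹ • b) = d at *
  generalize -((t + r)⁻¹ • (a + b)) = f at *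
  have hcf : s (c - f) = s (-(d - f)) := hs.eq_of_smul_eq_smul ht hr (by
    rw [add_smul] at hf
    simp only [smul_sub, smul_neg]
    grind)
  exact le_sup_of_le_sup_of_disjoint (hF.fst_le f trivial c trivial) (hF.fst_le f trivial d trivial)
    (hcf ▸ (hs.disjoint_neg _).symm)

theorem signExtend_add_le_of_pos_of_neg (hs : IsSignMap k s)
    (hF : IsCut (fun a b => s (b - a)) Set.univ F) {t r : k} (hr : r < 0) (hw : 0 < t + r)
    (a b : V) :
    signExtend s F (t + r, a + b) ≤ signExtend s F (t, a) ⊔ signExtend s F (r, b) := by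
  have ht : 0 < t := by grind
  rw [signExtend_of_pos ht, signExtend_of_neg hr, signExtend_of_pos hw]
  have hc := smul_neg_inv_smul ht.ne' a
  have hd := smul_neg_inv_smul hr.ne b
  have hf := smul_neg_inv_smul hw.ne' (a + b)
  generalize -(t⁻¹ • a) = c at *
  generalize -(r⁻¹ • b) = d at *
  generalize -((t + r)⁻¹ • (a + b)) = f at *
  have hcf : s (c - f) = s (d - c) := hs.eq_of_smul_eq_smul hw (neg_pos.2 hr) (by
    rw [add_smul] at hf
    simp only [smul_sub, add_smul, neg_smul]
    grind)
  calc (F f).1 ≤ s (c - f) ⊔ (F c).1 := hF.fst_le f trivial c trivial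
    _ ≤ ((F c).1 ⊔ (F d).2) ⊔ (F c).1 :=
      sup_le_sup_right (hcf.trans_le (hF.le_sup c trivial d trivial)) _
    _ = (F c).1 ⊔ (F d).2 := sup_eq_left.2 le_sup_left

theorem le_signExtend_sup_signExtend_neg (hs : IsSignMap k s)
    (hF : IsCut (fun a b => s (b - a)) Set.univ F) {t : k} (ht : 0 < t) (a b : V) :
    s (a + b) ≤ signExtend s F (t, a) ⊔ signExtend s F (-t, b) := by
  have h := hF.le_sup (-(t⁻¹ • a)) trivial (t⁻¹ • b) trivial
  rw [sub_neg_eq_add, ← smul_add, hs.smul_eq (inv_pos.2 ht), add_comm b] at h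
  rwa [signExtend_of_pos ht, signExtend_of_neg (neg_neg_of_pos ht), inv_neg, neg_smul, neg_neg]

theorem signExtend_add_le (hs : IsSignMap k s)
    (hF : IsCut (fun a b => s (b - a)) Set.univ F) (x y : k × V) :
    signExtend s F (x + y) ≤ signExtend s F x ⊔ signExtend s F y := by
  wlog hxy : y.1 ≤ x.1 generalizing x y
  · rw [add_comm, sup_comm]
    exact this y x (le_of_not_ge hxy)
  obtain ⟨t, a⟩ := x
  obtain ⟨r, b⟩ := y
  wlog hw : 0 ≤ t + r generalizing F t r a b
  · have := this hF.oppCut (-r) b (-t) a (neg_le_neg hxy) (by grind)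
    rwa [Prod.mk_add_mk, ← neg_add, signExtend_oppCut, signExtend_oppCut, signExtend_oppCut,
      sup_comm, add_comm r, add_comm b] at this
  obtain ht | ht : t = 0 ∨ 0 < t := by grind
  · obtain rfl : r = 0 := by grind
    simpa [ht] using hs.add_le a b
  obtain hr | rfl | hr := lt_trichotomy r 0
  · obtain hw | hw := hw.eq_or_lt
    · obtain rfl : r = -t := by grind
      simpa using le_signExtend_sup_signExtend_neg hs hF ht a b
    · exact signExtend_add_le_of_pos_of_neg hs hF hr hw a b
  · simpa using signExtend_add_le_of_pos_of_zero hs hF ht a b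
  · exact signExtend_add_le_of_pos_of_pos hs hF ht hr a b

theorem isSignMap_signExtend (hs : IsSignMap k s)
    (hF : IsCut (fun a b => s (b - a)) Set.univ F) :
    IsSignMap k (signExtend s F : k × V → L) where
  disjoint_neg := disjoint_signExtend_neg hs hF
  add_le := signExtend_add_le hs hF
  smul_eq := signExtend_smul hs

theorem IsSignMap.exists_extend_prod [Countable V] (hL : IsCompletelyNormal L)
    (hs : IsSignMap k s) (l : L) :
    ∃ s' : k × V → L, IsSignMap k s' ∧ (∀ a, s' (0, a) = s a) ∧ s' (1, 0) = l := by
  obtain ⟨F, hF, hl⟩ := hs.isValuedWeakOrder.exists_isCut hL 0 l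
  exact ⟨signExtend s F, isSignMap_signExtend hs hF, signExtend_zero,
    by simp [signExtend_of_pos, hl]⟩

theorem IsSignMap.exists_extend [Countable V] (hL : IsCompletelyNormal L) (hs : IsSignMap k s)
    {τ : V →ₗ[k] k} {e : V} (he : τ e = 1) (l : L) :
    ∃ s' : V → L, IsSignMap k s' ∧ (∀ a, τ a = 0 → s' a = s a) ∧ s' e = l := by
  obtain ⟨s', hs', hker, hl⟩ := hs.exists_extend_prod hL l
  refine ⟨_, hs'.comp_linearMap (τ.prod (LinearMap.id - τ.smulRight e)), fun a ha => ?_, ?_⟩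
  · simpa [ha] using hker a
  · simpa [he] using hl

theorem IsSignMap.exists_extend_seq [Countable V] (hL : IsCompletelyNormal L)
    (hs : IsSignMap k s) {τ : ℕ → V →ₗ[k] k} {e : ℕ → V} (he : ∀ n, τ n (e n) = 1)
    (he' : ∀ m n, m < n → τ n (e m) = 0) (hτ : ∀ x, ∃ n, ∀ m ≥ n, τ m x = 0) (l : ℕ → L) :
    ∃ s' : V → L, IsSignMap k s' ∧ (∀ x, (∀ n, τ n x = 0) → s' x = s x) ∧ ∀ n, s' (e n) = l n := by
  let A (n : ℕ) : Set V := {x | ∀ m ≥ n, τ m x = 0}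
  have hA : Monotone A := fun m n hmn x hx p hp => hx p (hmn.trans hp)
  obtain ⟨s', hs'₀, hs'⟩ := exists_limit_of_extension hA hτ
    (P := fun n F => IsSignMap k F ∧ ∀ m < n, F (e m) = l m) (F₀ := s) ⟨hs, by simp⟩
    fun n F ⟨hF, hFl⟩ => by
      obtain ⟨F', hF', hker, hl⟩ := hF.exists_extend hL (he n) (l n)
      refine ⟨F', ⟨hF', fun m hm => ?_⟩, fun x hx => (hker x (hx n le_rfl)).symm⟩
      obtain rfl | hm := (Nat.lt_succ_iff.1 hm).eq_or_lt
      · exact hl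
      · rw [hker _ (he' m n hm), hFl m hm]
  refine ⟨s', isSignMap_of_finite fun T hT => ?_, fun x hx => hs'₀ fun n _ => hx n, fun n => ?_⟩
  · obtain ⟨n, F, -, ⟨hF, -⟩, hs'F⟩ := hs' T hT
    exact ⟨F, hF, hs'F⟩
  · obtain ⟨m, F, hm, ⟨-, hFl⟩, hs'F⟩ := hs' {e n} (Set.finite_singleton _)
    have hnm : n < m := by
      by_contra! hmn
      exact one_ne_zero ((he n).symm.trans (hm rfl n hmn))
    rw [hs'F rfl, hFl n hnm]

end SignExtend

section Realization

theorem IsCut.exists_of_linearOrder {X M : Type*} [LinearOrder M] [DenselyOrdered M] [NoMinOrder M]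
    [NoMaxOrder M] [Nonempty M] {r : X → X → Prop} {E : Set X} {F : X → Prop × Prop}
    (hF : IsCut r E F) (hE : E.Finite) {f : X → M} (hf : ∀ x ∈ E, ∀ y ∈ E, f x < f y ↔ r x y) :
    ∃ z, ∀ x ∈ E, (f x < z ↔ (F x).1) ∧ (z < f x ↔ (F x).2) := by
  have hfst (x) (hx : x ∈ E) (y) (hy : y ∈ E) : (F x).1 → r x y ∨ (F y).1 := hF.fst_le x hx y hy
  have hsnd (x) (hx : x ∈ E) (y) (hy : y ∈ E) : (F y).2 → (F x).2 ∨ r x y := hF.snd_le x hx y hy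
  have hr (x) (hx : x ∈ E) (y) (hy : y ∈ E) : r x y → (F x).1 ∨ (F y).2 := hF.le_sup x hx y hy
  have hdisj (x) (hx : x ∈ E) (h₁ : (F x).1) (h₂ : (F x).2) : False :=
    (hF.disjoint x hx).le_bot ⟨h₁, h₂⟩
  by_cases h : ∃ b ∈ E, ¬ (F b).1 ∧ ¬ (F b).2
  · obtain ⟨b, hb, hb₁, hb₂⟩ := h
    refine ⟨f b, fun x hx => ?_⟩
    rw [hf x hx b hb, hf b hb x hx]
    exact ⟨⟨fun h => (hr x hx b hb h).resolve_right hb₂,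
      fun h => (hfst x hx b hb h).resolve_right hb₁⟩,
      ⟨fun h => (hr b hb x hx h).resolve_left hb₁,
      fun h => (hsnd b hb x hx h).resolve_left hb₂⟩⟩
  · push Not at h
    lift E to Finset X using hE
    obtain ⟨z, hz₁, hz₂⟩ := Order.exists_between_finsets ((E.filter fun x => (F x).1).image f)
      ((E.filter fun x => (F x).2).image f) (by
        simp only [Finset.forall_mem_image, Finset.mem_filter]
        rintro x ⟨hx, hx₁⟩ y ⟨hy, hy₂⟩
        exact (hf x hx y hy).2 ((hfst x hx y hy hx₁).resolve_right fun hy₁ => hdisj y hy hy₁ hy₂))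
    simp only [Finset.forall_mem_image, Finset.mem_filter] at hz₁ hz₂
    refine ⟨z, fun x hx => ?_⟩
    by_cases hx₁ : (F x).1
    · have hxz := hz₁ ⟨hx, hx₁⟩
      exact ⟨iff_of_true hxz hx₁, iff_of_false hxz.not_gt (hdisj x hx hx₁)⟩
    · have hzx := hz₂ ⟨hx, h x hx hx₁⟩
      exact ⟨iff_of_false hzx.not_gt hx₁, iff_of_true hzx (h x hx hx₁)⟩

section Prod

variable {k V L : Type*} [DivisionRing k] [AddCommGroup V] [Module k V]

/-- The truth values of `c < (1, 0)` and `(1, 0) < c`, for `c` in `V`, in an `L`-valued linear total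
preorder on `k × V`. -/
def sectionCut (s : k × V → L) (c : V) : L × L := (s (1, -c), s (-1, c))

variable [LinearOrder k] [DistribLattice L] [OrderBot L] {s : k × V → L}

theorem IsSignMap.isCut_sectionCut (hs : IsSignMap k s) :
    IsCut (fun a b => s (0, b - a)) Set.univ (sectionCut s) where
  disjoint c _ := by simpa [sectionCut] using hs.disjoint_neg (1, -c)
  fst_le c _ d _ := by
    simpa [sectionCut, sub_add_comm, sub_eq_add_neg] using hs.add_le (0, d - c) (1, -d)
  snd_le c _ d _ := by simpa [sectionCut] using hs.add_le (-1, c) (0, d - c)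
  le_sup c _ d _ := by simpa [sectionCut, neg_add_eq_sub] using hs.add_le (1, -c) (-1, d)

theorem IsSignMap.eq_signExtend [IsStrictOrderedRing k] (hs : IsSignMap k s) (x : k × V) :
    s x = signExtend (fun a => s (0, a)) (sectionCut s) x := by
  obtain ⟨t, a⟩ := x
  obtain ht | rfl | ht := lt_trichotomy t 0
  · rw [signExtend_of_neg ht]
    refine hs.eq_of_smul_eq_smul one_pos (neg_pos.2 ht) ?_
    simp [ht.ne]
  · simp
  · rw [signExtend_of_pos ht]
    refine hs.eq_of_smul_eq_smul one_pos ht ?_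
    simp [ht.ne']

end Prod

variable {k V : Type*} [DivisionRing k] [LinearOrder k] [AddCommGroup V] [Module k V]

/-- Finitely many signs in a linear total preorder on `V` are realized by a linear functional. -/
def FiniteSignsRealizable (k V : Type*) [DivisionRing k] [LinearOrder k] [AddCommGroup V]
    [Module k V] : Prop :=
  ∀ P : V → Prop, IsSignMap k P → ∀ S : Set V, S.Finite → ∃ ℓ : V →ₗ[k] k, ∀ a ∈ S, 0 < ℓ a ↔ P a

theorem FiniteSignsRealizable.of_linearEquiv {W : Type*} [AddCommGroup W] [Module k W]
    (h : FiniteSignsRealizable k V) (e : W ≃ₗ[k] V) : FiniteSignsRealizable k W := by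
  intro P hP S hS
  obtain ⟨ℓ, hℓ⟩ := h _ (hP.comp_linearMap e.symm.toLinearMap) (e '' S) (hS.image e)
  exact ⟨ℓ ∘ₗ e, fun a ha => by simpa using hℓ (e a) (Set.mem_image_of_mem e ha)⟩

theorem finiteSignsRealizable_of_subsingleton [Subsingleton V] : FiniteSignsRealizable k V := by
  refine fun P hP S _ => ⟨0, fun a _ => ?_⟩
  have := hP.disjoint_neg a
  simpa [Subsingleton.elim (-a) a] using this

variable [IsStrictOrderedRing k]

theorem isSignMap_linearMap (ℓ : V →ₗ[k] k) : IsSignMap k fun a => 0 < ℓ a where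
  disjoint_neg a := by
    rw [Prop.disjoint_iff, map_neg, neg_pos]
    exact fun h => lt_asymm h.1 h.2
  add_le a b h := by
    by_contra hab
    obtain ⟨ha, hb⟩ := not_or.1 hab
    exact (add_nonpos (not_lt.1 ha) (not_lt.1 hb)).not_gt (map_add ℓ a b ▸ h)
  smul_eq ht a := by simp [ht]

theorem denselyOrdered_of_isStrictOrderedRing : DenselyOrdered k where
  dense a b hab := by
    have h₀ : (0 : k) < 2⁻¹ := inv_pos.2 two_pos
    have h₁ : (2⁻¹ : k) < 1 := inv_lt_one_of_one_lt₀ one_lt_two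
    refine ⟨a + 2⁻¹ * (b - a), lt_add_of_pos_right a (mul_pos h₀ (sub_pos.2 hab)), ?_⟩
    rw [← lt_sub_iff_add_lt']
    exact mul_lt_of_lt_one_left (sub_pos.2 hab) h₁

theorem FiniteSignsRealizable.prod (hV : FiniteSignsRealizable k V) :
    FiniteSignsRealizable k (k × V) := by
  intro P hP S hS
  have := denselyOrdered_of_isStrictOrderedRing (k := k)
  let E : Set V := (fun x : k × V => -(x.1⁻¹ • x.2)) '' S
  have hE : E.Finite := hS.image _
  obtain ⟨ℓ, hℓ⟩ := hV _ (hP.comp_linearMap (LinearMap.inr k k V))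
    (Prod.snd '' S ∪ Set.image2 (fun c d => d - c) E E) ((hS.image _).union (hE.image2 _ hE))
  obtain ⟨z, hz⟩ := (hP.isCut_sectionCut.mono (Set.subset_univ E)).exists_of_linearOrder hE
    (f := ℓ) fun c hc d hd => by
      simpa using hℓ (d - c) (Or.inr (Set.mem_image2_of_mem hc hd))
  let ℓ' : k × V →ₗ[k] k := (LinearMap.toSpanSingleton k k z).coprod ℓ
  refine ⟨ℓ', fun x hx => iff_of_eq ?_⟩
  have hcut (c) (hc : c ∈ E) : sectionCut (fun x => 0 < ℓ' x) c = sectionCut P c :=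
    Prod.ext (by simpa [ℓ', sectionCut, ← sub_eq_add_neg] using (hz c hc).1)
      (by simpa [ℓ', sectionCut, neg_add_eq_sub] using (hz c hc).2)
  have hzero : (0 < ℓ' (0, x.2)) = P (0, x.2) := by
    simpa [ℓ'] using hℓ x.2 (Or.inl (Set.mem_image_of_mem _ hx))
  rw [(isSignMap_linearMap ℓ').eq_signExtend x, hP.eq_signExtend x, signExtend, signExtend, hzero,
    hcut _ (Set.mem_image_of_mem _ hx)]

theorem finiteSignsRealizable_fin (n : ℕ) : FiniteSignsRealizable k (Fin n → k) := by
  induction n with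
  | zero => exact finiteSignsRealizable_of_subsingleton
  | succ n ih => exact ih.prod.of_linearEquiv (Fin.consLinearEquiv k fun _ => k).symm

theorem finiteSignsRealizable : FiniteSignsRealizable k V := by
  intro P hP S hS
  let W := Submodule.span k S
  have : Module.Finite k W := Module.Finite.span_of_finite k hS
  have hW : FiniteSignsRealizable k W :=
    (finiteSignsRealizable_fin _).of_linearEquiv (Module.finBasis k W).equivFun
  obtain ⟨ℓ, hℓ⟩ := hW _ (hP.comp_linearMap W.subtype) (W.subtype ⁻¹' S)
    (hS.preimage Subtype.val_injective.injOn)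
  obtain ⟨ℓ', rfl⟩ := ℓ.exists_extend
  exact ⟨ℓ', fun a ha => hℓ ⟨a, Submodule.subset_span ha⟩ ha⟩

end Realization

section Pairing

variable {k ι : Type*} [DivisionRing k]

theorem pairing_eq_linearCombination (a x : ι →₀ k) :
    pairing a x = Finsupp.linearCombination k x a :=
  rfl

theorem pairing_add (a b x : ι →₀ k) : pairing (a + b) x = pairing a x + pairing b x := by
  simp only [pairing_eq_linearCombination, map_add]

theorem pairing_neg (a x : ι →₀ k) : pairing (-a) x = -pairing a x := by
  simp only [pairing_eq_linearCombination, map_neg]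

theorem pairing_smul (t : k) (a x : ι →₀ k) : pairing (t • a) x = t * pairing a x := by
  simp only [pairing_eq_linearCombination, map_smul, smul_eq_mul]

theorem exists_pairing_eq (ℓ : (ι →₀ k) →ₗ[k] k) {S : Set (ι →₀ k)} (hS : S.Finite) :
    ∃ x, ∀ a ∈ S, pairing a x = ℓ a := by
  lift S to Finset (ι →₀ k) using hS
  refine ⟨Finsupp.indicator (S.biUnion Finsupp.support) fun i _ => ℓ (Finsupp.single i 1),
    fun a ha => ?_⟩
  conv_rhs => rw [← a.sum_single, map_finsuppSum]
  refine Finsupp.sum_congr fun i hi => ?_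
  rw [Finsupp.indicator_of_mem (Finset.mem_biUnion.2 ⟨a, ha, hi⟩), ← smul_eq_mul, ← map_smul,
    Finsupp.smul_single_one]

theorem IsSignMap.exists_pairing_pos_iff [LinearOrder k] [IsStrictOrderedRing k]
    {P : (ι →₀ k) → Prop} (hP : IsSignMap k P) {S : Set (ι →₀ k)} (hS : S.Finite) :
    ∃ x, ∀ a ∈ S, 0 < pairing a x ↔ P a := by
  obtain ⟨ℓ, hℓ⟩ := finiteSignsRealizable P hP S hS
  obtain ⟨x, hx⟩ := exists_pairing_eq ℓ hS
  exact ⟨x, fun a ha => by rw [hx a ha, hℓ a ha]⟩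

theorem pairing_restrictTo (I : Set ι) (a x : ι →₀ k) :
    pairing (restrictTo I a) x = pairing a (restrictTo I x) := by
  refine (Finsupp.sum_of_support_subset _ (Finset.filter_subset _ _) _ (by simp)).trans
    (Finset.sum_congr rfl fun i _ => ?_)
  by_cases hi : i ∈ I <;> simp [restrictTo, hi]

theorem restrictTo_mem_suppIn (I : Set ι) (x : ι →₀ k) : restrictTo I x ∈ suppIn I :=
  fun _ hi => Finsupp.filter_apply_neg _ _ hi

theorem restrictTo_eq_self {I : Set ι} {x : ι →₀ k} (hx : x ∈ suppIn I) : restrictTo I x = x :=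
  Finsupp.filter_eq_self_iff _ _ |>.2 fun i hi => not_not.1 fun h => hi (hx i h)

end Pairing

section SurjectiveSign

variable {k ι L : Type*} [DivisionRing k] [LinearOrder k] [IsStrictOrderedRing k] [Countable k]
  [Countable ι] [DistribLattice L] [OrderBot L] [Countable L]

theorem IsSignMap.exists_surjective_extend (hL : IsCompletelyNormal L) {I : Set ι}
    (hI : Iᶜ.Infinite) {s : (ι →₀ k) → L} (hs : IsSignMap k s) :
    ∃ s' : (ι →₀ k) → L, IsSignMap k s' ∧ Set.EqOn s' s (suppIn I) ∧ Function.Surjective s' := by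
  obtain ⟨l, hl⟩ := exists_surjective_nat L
  let j (n : ℕ) : ι := hI.natEmbedding _ n
  have hj : Function.Injective j := Subtype.val_injective.comp (hI.natEmbedding _).injective
  have hfinite (x : ι →₀ k) : ∃ n, ∀ m ≥ n, x (j m) = 0 := by
    obtain ⟨n, hn⟩ := (x.hasFiniteSupport.preimage hj.injOn).bddAbove
    refine ⟨n + 1, fun m hm => ?_⟩
    by_contra hx
    exact (hn hx).not_gt hm
  obtain ⟨s', hs', hs's, hs'l⟩ := hs.exists_extend_seq hL (τ := fun n => Finsupp.lapply (j n))
    (e := fun n => Finsupp.single (j n) 1) (by simp) 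
    (fun _ _ hmn => Finsupp.single_eq_of_ne (hj.ne hmn.ne')) hfinite l
  refine ⟨s', hs', fun x hx => hs's x fun n => hx _ (hI.natEmbedding _ n).2, fun a => ?_⟩
  obtain ⟨n, rfl⟩ := hl a
  exact ⟨_, hs'l n⟩

end SurjectiveSign

section SignGraph

variable {k ι L : Type*} [DivisionRing k] [LinearOrder k] [DistribLattice L]

/-- The graph of the lattice homomorphism on `Op⁻` that sends `⟦a > 0⟧` to `s a`. -/
def signGraph (s : (ι →₀ k) → L) : Set (Set (ι →₀ k) × L) :=
  latticeClosure (Set.range fun a => ({x | 0 < pairing a x}, s a))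

variable {s : (ι →₀ k) → L} {U U' : Set (ι →₀ k)} {l l' : L}

theorem mem_signGraph_pos (a : ι →₀ k) : ({x | 0 < pairing a x}, s a) ∈ signGraph s :=
  subset_latticeClosure (Set.mem_range_self a)

theorem union_mem_signGraph (h : (U, l) ∈ signGraph s) (h' : (U', l') ∈ signGraph s) :
    (U ∪ U', l ⊔ l') ∈ signGraph s :=
  isSublattice_latticeClosure.supClosed h h'

theorem inter_mem_signGraph (h : (U, l) ∈ signGraph s) (h' : (U', l') ∈ signGraph s) :
    (U ∩ U', l ⊓ l') ∈ signGraph s :=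
  isSublattice_latticeClosure.infClosed h h'

theorem exists_finite_of_mem_signGraph {p : Set (ι →₀ k) × L} (hp : p ∈ signGraph s) :
    ∃ S : Set (ι →₀ k), S.Finite ∧ ∀ (f : LatticeHom L Prop) (x : ι →₀ k),
      (∀ a ∈ S, 0 < pairing a x ↔ f (s a)) → (x ∈ p.1 ↔ f p.2) := by
  induction hp using latticeClosure_sup_inf_induction with
  | mem p hp =>
    obtain ⟨a, rfl⟩ := hp
    exact ⟨{a}, Set.finite_singleton a, fun f x hx => hx a rfl⟩
  | sup p _ q _ hp hq =>
    obtain ⟨S, hS, hp⟩ := hp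
    obtain ⟨T, hT, hq⟩ := hq
    refine ⟨S ∪ T, hS.union hT, fun f x hx => ?_⟩
    simpa using or_congr (hp f x fun a ha => hx a (.inl ha)) (hq f x fun a ha => hx a (.inr ha))
  | inf p _ q _ hp hq =>
    obtain ⟨S, hS, hp⟩ := hp
    obtain ⟨T, hT, hq⟩ := hq
    refine ⟨S ∪ T, hS.union hT, fun f x hx => ?_⟩
    simpa using and_congr (hp f x fun a ha => hx a (.inl ha)) (hq f x fun a ha => hx a (.inr ha))

variable [IsStrictOrderedRing k] [OrderBot L]

theorem IsSignMap.le_of_subset_of_mem_signGraph (hs : IsSignMap k s) (h : (U, l) ∈ signGraph s)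
    (h' : (U', l') ∈ signGraph s) (hU : U ⊆ U') : l ≤ l' := by
  by_contra hl
  obtain ⟨f, hfl, hfl'⟩ := exists_latticeHom_prop_of_not_le hl
  have hf : f ⊥ = ⊥ := eq_bot_iff.2 fun hbot => hfl' (OrderHomClass.mono f bot_le hbot)
  obtain ⟨S, hS, hSU⟩ := exists_finite_of_mem_signGraph h
  obtain ⟨T, hT, hTU'⟩ := exists_finite_of_mem_signGraph h'
  obtain ⟨x, hx⟩ := (hs.comp_latticeHom f hf).exists_pairing_pos_iff (hS.union hT)
  have hxU : x ∈ U := (hSU f x fun a ha => hx a (.inl ha)).2 hfl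
  exact hfl' ((hTU' f x fun a ha => hx a (.inr ha)).1 (hU hxU))

theorem IsSignMap.exists_eq_of_mem_signGraph (hs : IsSignMap k s) :
    ∃ g : Set (ι →₀ k) → L, ∀ U l, (U, l) ∈ signGraph s → g U = l := by
  have h (U : Set (ι →₀ k)) : ∃ m, ∀ l, (U, l) ∈ signGraph s → m = l := by
    by_cases hU : ∃ m, (U, m) ∈ signGraph s
    · obtain ⟨m, hm⟩ := hU
      exact ⟨m, fun l hl => le_antisymm (hs.le_of_subset_of_mem_signGraph hm hl subset_rfl)
        (hs.le_of_subset_of_mem_signGraph hl hm subset_rfl)⟩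
    · exact ⟨⊥, fun l hl => absurd ⟨l, hl⟩ hU⟩
  choose g hg using h
  exact ⟨g, hg⟩

end SignGraph

section OpHom

variable {k ι L : Type*} [DivisionRing k] [LinearOrder k] {A Ω : Set (ι →₀ k)}

/-- `h` restricts to a lattice homomorphism from `Op⁻(A, Ω)` to `L`. -/
def IsOpHom [Lattice L] (A Ω : Set (ι →₀ k)) (h : Set (ι →₀ k) → L) : Prop :=
  ∀ U V, MemOp A Ω U → MemOp A Ω V → h (U ∪ V) = h U ⊔ h V ∧ h (U ∩ V) = h U ⊓ h V

theorem IsOpHom.mono [Lattice L] {h : Set (ι →₀ k) → L} (hh : IsOpHom A Ω h) {U V : Set (ι →₀ k)}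
    (hU : MemOp A Ω U) (hV : MemOp A Ω V) (hUV : U ⊆ V) : h U ≤ h V := by
  rw [← sup_eq_right, ← (hh U V hU hV).1, Set.union_eq_self_of_subset_left hUV]

theorem memOp_suppIn_pos (I : Set ι) (a : ι →₀ k) :
    MemOp (suppIn I) (suppIn I) {x ∈ suppIn I | 0 < pairing a x} := by
  convert MemOp.pos (Ω := suppIn I) (restrictTo I a) (restrictTo_mem_suppIn I a) using 1
  ext x
  exact and_congr_right fun hx => by rw [pairing_restrictTo, restrictTo_eq_self hx]

variable [IsStrictOrderedRing k]

theorem MemOp.induction_of_neg_mem (hA : ∀ a ∈ A, -a ∈ A)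
    {motive : ∀ U : Set (ι →₀ k), MemOp A Ω U → Prop}
    (pos : ∀ a ha, motive {x ∈ Ω | 0 < pairing a x} (.pos a ha))
    (union : ∀ U hU V hV, motive U hU → motive V hV → motive (U ∪ V) (.union hU hV))
    (inter : ∀ U hU V hV, motive U hU → motive V hV → motive (U ∩ V) (.inter hU hV))
    {U : Set (ι →₀ k)} (hU : MemOp A Ω U) : motive U hU := by
  induction hU with
  | pos a ha => exact pos a ha
  | neg a ha => simpa only [pairing_neg, neg_pos] using pos (-a) (hA a ha)
  | union hU hV ihU ihV => exact union _ hU _ hV ihU ihV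
  | inter hU hV ihU ihV => exact inter _ hU _ hV ihU ihV

variable [DistribLattice L]

theorem epsilonMap_mem_signGraph {I : Set ι} {h : Set (ι →₀ k) → L}
    (hh : IsOpHom (suppIn I) (suppIn I) h) {s : (ι →₀ k) → L}
    (hs : Set.EqOn s (fun a => h {x ∈ suppIn I | 0 < pairing a x}) (suppIn I))
    {U : Set (ι →₀ k)} (hU : MemOp (suppIn I) (suppIn I) U) :
    (epsilonMap I U, h U) ∈ signGraph s := by
  have hneg (a : ι →₀ k) (ha : a ∈ suppIn I) : -a ∈ suppIn I := fun i hi => by simp [ha i hi]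
  induction hU using MemOp.induction_of_neg_mem hneg with
  | pos a ha =>
    convert mem_signGraph_pos a using 2
    · ext x
      simp [epsilonMap, restrictTo_mem_suppIn, ← pairing_restrictTo, restrictTo_eq_self ha]
    · exact (hs ha).symm
  | union U hU V hV ihU ihV =>
    rw [(hh U V hU hV).1]
    exact union_mem_signGraph ihU ihV
  | inter U hU V hV ihU ihV =>
    rw [(hh U V hU hV).2]
    exact inter_mem_signGraph ihU ihV

theorem MemOp.exists_mem_signGraph {U : Set (ι →₀ k)} (hU : MemOp Set.univ Set.univ U)
    (s : (ι →₀ k) → L) : ∃ l, (U, l) ∈ signGraph s := by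
  have hneg (a : ι →₀ k) (_ : a ∈ Set.univ) : -a ∈ Set.univ := trivial
  induction hU using MemOp.induction_of_neg_mem hneg with
  | pos a _ => exact ⟨s a, by simpa using mem_signGraph_pos a⟩
  | union U _ V _ ihU ihV => exact ⟨_, union_mem_signGraph ihU.choose_spec ihV.choose_spec⟩
  | inter U _ V _ ihU ihV => exact ⟨_, inter_mem_signGraph ihU.choose_spec ihV.choose_spec⟩

variable [OrderBot L]

theorem IsOpHom.isSignMap {I : Set ι} {h : Set (ι →₀ k) → L}
    (hh : IsOpHom (suppIn I) (suppIn I) h) (h_empty : h ∅ = ⊥) :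
    IsSignMap k fun a => h {x ∈ suppIn I | 0 < pairing a x} where
  disjoint_neg a := by
    rw [disjoint_iff, ← (hh _ _ (memOp_suppIn_pos I a) (memOp_suppIn_pos I (-a))).2, ← h_empty]
    congr 1
    refine Set.eq_empty_of_forall_notMem fun x hx => ?_
    exact lt_asymm hx.1.2 (neg_pos.1 (pairing_neg a x ▸ hx.2.2))
  add_le a b := by
    have ha := memOp_suppIn_pos I a
    have hb := memOp_suppIn_pos I b
    rw [← (hh _ _ ha hb).1]
    refine hh.mono (memOp_suppIn_pos I _) (ha.union hb) fun x hx => ?_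
    have hab : 0 < pairing a x ∨ 0 < pairing b x := by
      by_contra! hab
      exact (add_nonpos hab.1 hab.2).not_gt (pairing_add a b x ▸ hx.2)
    exact hab.imp (And.intro hx.1) (And.intro hx.1)
  smul_eq ht a := by simp only [pairing_smul, mul_pos_iff_of_pos_left ht]

theorem IsSignMap.exists_isOpHom {s : (ι →₀ k) → L} (hs : IsSignMap k s) :
    ∃ g, IsOpHom Set.univ Set.univ g ∧ ∀ U l, (U, l) ∈ signGraph s → g U = l := by
  obtain ⟨g, hg⟩ := hs.exists_eq_of_mem_signGraph
  refine ⟨g, fun U V hU hV => ?_, hg⟩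
  obtain ⟨l, hl⟩ := hU.exists_mem_signGraph s
  obtain ⟨m, hm⟩ := hV.exists_mem_signGraph s
  rw [hg U l hl, hg V m hm]
  exact ⟨hg _ _ (union_mem_signGraph hl hm), hg _ _ (inter_mem_signGraph hl hm)⟩

theorem IsOpHom.exists_surjective_extend [Countable k] [Countable ι] [Countable L]
    (hL : IsCompletelyNormal L) {I : Set ι} (hI : Iᶜ.Infinite) {h : Set (ι →₀ k) → L}
    (hh : IsOpHom (suppIn I) (suppIn I) h) (h_empty : h ∅ = ⊥) :
    ∃ g : Set (ι →₀ k) → L, IsOpHom Set.univ Set.univ g ∧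
      (∀ l, ∃ U, MemOp Set.univ Set.univ U ∧ g U = l) ∧
      ∀ U, MemOp (suppIn I) (suppIn I) U → g (epsilonMap I U) = h U := by
  obtain ⟨s, hs, hsh, hs_surj⟩ := (hh.isSignMap h_empty).exists_surjective_extend hL hI
  obtain ⟨g, hg, hgs⟩ := hs.exists_isOpHom
  refine ⟨g, hg, fun l => ?_, fun U hU => hgs _ _ (epsilonMap_mem_signGraph hh hsh hU)⟩
  obtain ⟨a, rfl⟩ := hs_surj l
  exact ⟨_, .pos a trivial, hgs _ _ (by simpa using mem_signGraph_pos a)⟩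

end OpHom

theorem isStrictOrderedRing_of_covariantClass {k : Type*} [DivisionRing k] [LinearOrder k]
    [CovariantClass k k (· + ·) (· < ·)] [PosMulStrictMono k] : IsStrictOrderedRing k := by
  have : IsOrderedAddMonoid k :=
    { add_le_add_left := fun a b h c => by
        obtain rfl | h := h.eq_or_lt
        · exact le_rfl
        · exact (add_lt_add_left h c).le }
  exact .of_mul_pos fun a b ha hb => mul_pos ha hb

/-- for a countable totally ordered division ring `k`, countable `I ⊊ J`
with `J∖I` infinite (here `J = ι`), `K`, `L` distributive `0`-lattices with `L` countable
and completely normal, a `0`-lattice homomorphism `φ : K → L` and a `0`-lattice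
homomorphism `f : Op⁻(k^(I), k^(I)) → K`, there is a surjective lattice homomorphism
`g : Op⁻(k^(J), k^(J)) ↠ L` with `g ∘ ε_{I,J} = φ ∘ f` on `Op⁻(k^(I), k^(I))`. -/
theorem stmt3 (k ι : Type*) [DivisionRing k] [LinearOrder k]
    [CovariantClass k k (· + ·) (· < ·)] [PosMulStrictMono k] [MulPosStrictMono k]
    [Countable k] [Countable ι]
    (I : Set ι) (hIne : I ≠ Set.univ) (hIinf : (Set.univ \ I).Infinite)
    (K : Type*) [DistribLattice K] [OrderBot K]
    (L : Type*) [DistribLattice L] [OrderBot L] [Countable L]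
    (hcn : ∀ a b : L, ∃ x y : L, a ⊔ b = a ⊔ y ∧ a ⊔ b = x ⊔ b ∧ x ⊓ y = ⊥)
    (φ : K → L)
    (hφ : ∀ x y : K, φ (x ⊔ y) = φ x ⊔ φ y ∧ φ (x ⊓ y) = φ x ⊓ φ y)
    (hφ0 : φ ⊥ = ⊥)
    (f : Set (ι →₀ k) → K)
    (hf : ∀ U V : Set (ι →₀ k),
      MemOp (suppIn I) (suppIn I) U → MemOp (suppIn I) (suppIn I) V →
      f (U ∪ V) = f U ⊔ f V ∧ f (U ∩ V) = f U ⊓ f V)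
    (hf0 : f ∅ = ⊥) :
    ∃ g : Set (ι →₀ k) → L,
      (∀ U V : Set (ι →₀ k),
        MemOp (Set.univ : Set (ι →₀ k)) Set.univ U →
        MemOp (Set.univ : Set (ι →₀ k)) Set.univ V →
        g (U ∪ V) = g U ⊔ g V ∧ g (U ∩ V) = g U ⊓ g V) ∧
      (∀ l : L, ∃ U : Set (ι →₀ k),
        MemOp (Set.univ : Set (ι →₀ k)) Set.univ U ∧ g U = l) ∧
      (∀ U : Set (ι →₀ k), MemOp (suppIn I) (suppIn I) U →
        g (epsilonMap I U) = φ (f U)) := by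
  have := isStrictOrderedRing_of_covariantClass (k := k)
  have hφf : IsOpHom (suppIn I) (suppIn I) (φ ∘ f) := fun U V hU hV => by
    simp only [Function.comp_apply, hf U V hU hV, hφ, and_self]
  exact hφf.exists_surjective_extend hcn (by rwa [Set.compl_eq_univ_sdiff]) (by simp [hf0, hφ0])
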